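/- Let G be a group generated by a finite set V, acting on a compact interval I = [a,b] by orientation-preserving homeomorphisms. For x ∈ I and w ∈ G, the covering distance cd(x, w·x) with respect to the open cover 𝒱 = ⋃_{v∈V} π₀(supp v) satisfies cd(x, w·x) ≤ ‖w‖, where ‖w‖ is the syllable length of w (the minimal ℓ such that w is a product of ℓ powers of generators). -/

import Mathlib

/-- The open support of a permutation of `ℝ`. -/
def suppSet (f : Equiv.Perm ℝ) : Set ℝ := {x | f x ≠ x}

/-- The cover `𝒱`: connected components of the supports of the generators. -/
def coverFam {G : Type*} [Group G] (V : Set G) (φ : G →* Equiv.Perm ℝ) :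
    Set (Set ℝ) :=
  {C | ∃ v ∈ V, ∃ x ∈ suppSet (φ v), C = connectedComponentIn (suppSet (φ v)) x}

/-- The `𝒱`-covering length of `A`: the least number of members of `𝒱` needed to
cover `A` (with `⊤` if impossible; `0` covers `∅`). -/
noncomputable def coverLen (𝒱 : Set (Set ℝ)) (A : Set ℝ) : ℕ∞ :=
  sInf {n : ℕ∞ | ∃ F : Finset (Set ℝ), ↑F ⊆ 𝒱 ∧ (F.card : ℕ∞) = n ∧ A ⊆ ⋃₀ ↑F}

/-- The `𝒱`-covering distance between `x` and `y`. -/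
noncomputable def coverDist (𝒱 : Set (Set ℝ)) (x y : ℝ) : ℕ∞ :=
  if x = y then 0 else coverLen 𝒱 (Set.Icc (min x y) (max x y))

/-- The syllable length of `w` with respect to the generating set `V`: the least
`ℓ` such that `w = v₁^{n₁} ⋯ v_ℓ^{n_ℓ}` with each `vᵢ ∈ V`, `nᵢ ∈ ℤ`. -/
noncomputable def syllableLength {G : Type*} [Group G] (V : Set G) (w : G) : ℕ∞ :=
  sInf {n : ℕ∞ | ∃ vs : List (G × ℤ), (∀ p ∈ vs, p.1 ∈ V) ∧
    (vs.length : ℕ∞) = n ∧ w = (vs.map fun p => p.1 ^ p.2).prod}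

theorem uIcc_subset_supp {G : Type*} [Group G] (φ : G →* Equiv.Perm ℝ)
    (hmono : ∀ g : G, Monotone ⇑(φ g)) (v : G) (n : ℤ) (y : ℝ)
    (hy : φ (v ^ n) y ≠ y) : Set.uIcc y (φ (v ^ n) y) ⊆ suppSet (φ v) := by
  intro z hz hfix
  have hzn : φ (v ^ n) z = z := by
    rw [map_zpow]
    exact Function.IsFixedPt.perm_zpow (e := φ v) hfix n
  have key : z = φ (v ^ n) y → False := by
    intro h
    have h2 : φ (v ^ n) z = φ (v ^ n) y := hzn.trans h
    have h3 := (φ (v ^ n)).injective h2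
    exact hy (h.symm.trans h3)
  rcases Set.mem_uIcc.1 hz with ⟨h1, h2⟩ | ⟨h1, h2⟩
  · have := hmono (v ^ n) h1
    rw [hzn] at this
    exact key (le_antisymm h2 this)
  · have := hmono (v ^ n) h2
    rw [hzn] at this
    exact key (le_antisymm this h1)

theorem exists_cover {G : Type*} [Group G] (V : Set G) (φ : G →* Equiv.Perm ℝ)
    (hmono : ∀ g : G, Monotone ⇑(φ g)) (x : ℝ) (vs : List (G × ℤ))
    (hvs : ∀ p ∈ vs, p.1 ∈ V) :
    ∃ F : Finset (Set ℝ), (↑F : Set (Set ℝ)) ⊆ coverFam V φ ∧ F.card ≤ vs.length ∧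
      (x = φ (vs.map fun p => p.1 ^ p.2).prod x ∨
        Set.uIcc x (φ (vs.map fun p => p.1 ^ p.2).prod x) ⊆ ⋃₀ ↑F) := by
  classical
  induction vs with
  | nil => exact ⟨∅, by simp, by simp, Or.inl (by simp)⟩
  | cons p vs ih =>
    obtain ⟨F, hF, hc, hcov⟩ := ih (fun q hq => hvs q (List.mem_cons_of_mem _ hq))
    simp only [List.map_cons, List.prod_cons, map_mul, Equiv.Perm.mul_apply, List.length_cons]
    generalize φ (vs.map fun p => p.1 ^ p.2).prod x = y at hcov ⊢
    by_cases hy : φ (p.1 ^ p.2) y = y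
    · rw [hy]
      exact ⟨F, hF, by omega, hcov⟩
    · have hsub := uIcc_subset_supp φ hmono p.1 p.2 y hy
      have hC : Set.uIcc y (φ (p.1 ^ p.2) y) ⊆ connectedComponentIn (suppSet (φ p.1)) y :=
        isPreconnected_uIcc.subset_connectedComponentIn Set.left_mem_uIcc hsub
      refine ⟨insert (connectedComponentIn (suppSet (φ p.1)) y) F, ?_, ?_, Or.inr ?_⟩
      · rw [Finset.coe_insert]
        exact Set.insert_subset ⟨p.1, hvs p List.mem_cons_self, y, hsub Set.left_mem_uIcc, rfl⟩ hF
      · exact (Finset.card_insert_le _ _).trans (by omega)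
      · rw [Finset.coe_insert, Set.sUnion_insert]
        rcases hcov with h | h
        · rw [h]
          exact hC.trans Set.subset_union_left
        · refine (Set.uIcc_subset_uIcc_union_uIcc (b := y)).trans ?_
          exact Set.union_subset (h.trans Set.subset_union_right) (hC.trans Set.subset_union_left)

/-- For a group `G` generated by a finite set `V` acting on a compact interval
`I = [a,b]` by orientation-preserving homeomorphisms, the covering distance
satisfies `cd(x, w·x) ≤ ‖w‖` for every `x ∈ I` and `w ∈ G`. -/
theorem coverDist_le_syllableLength {G : Type*} [Group G] (V : Finset G)
    (hgen : Subgroup.closure (V : Set G) = ⊤)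
    (φ : G →* Equiv.Perm ℝ)
    (hmono : ∀ g : G, Monotone ⇑(φ g))
    (hcont : ∀ g : G, Continuous ⇑(φ g))
    (a b : ℝ) (hab : a ≤ b)
    (hsupp : ∀ (g : G) (x : ℝ), x ∉ Set.Icc a b → φ g x = x)
    (x : ℝ) (hx : x ∈ Set.Icc a b) (w : G) :
    coverDist (coverFam (V : Set G) φ) x (φ w x) ≤
      syllableLength (V : Set G) w := by
  refine le_sInf ?_
  rintro _ ⟨vs, hvs, rfl, rfl⟩
  obtain ⟨F, hF, hc, hcov⟩ := exists_cover (V : Set G) φ hmono x vs hvs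
  unfold coverDist
  split_ifs with hxy
  · exact zero_le
  · refine le_trans (b := (F.card : ℕ∞)) (sInf_le ⟨F, hF, rfl, hcov.resolve_left hxy⟩) ?_
    exact_mod_cast hc
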